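/- Let (X,r,α) be a left non-degenerate involutive Hom-quadratic set, with r(x,y) = (λ_x(y), ρ_y(x)), and let r′ be its twist, given by r′(x,y) = (λ_{α(x)}(y), λ_{λ_{α²(x)}(α(y))}^{-1}(x)). Then (X,r′,α) is a set-theoretic solution to the Hom-Yang-Baxter equation if and only if the restriction of r to α(X) × α(X) (which is well defined since r(α(x),α(y)) = (α(λ_x(y)), α(ρ_y(x)))) is a set-theoretic solution to the Yang-Baxter equation and r(α²(u), v) = (id × α²)(r(u,v)) for all u,v ∈ α(X). -/

import Mathlib

/-!
Write `x · y = λ_x⁻¹(y)`. Involutivity of `r` says exactly that `r (x, x · u) = (u, u · x)`, and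
the twist has the same shape for the operation `x * y = α x · y`. Parametrising triples as
`(x, x * s, (x * s) * (α x * q))`, the Hom-braid relation at such a triple becomes three identities
in `*` and `α`, one per coordinate (`braid_iff`); taking the structure map to be the identity, the
same lemma expresses the braid relation of `r` through the cycle identity
`(x · y) · (x · z) = (y · x) · (y · z)`.

The image `A` of `α` is closed under `·` and under each `λ_u`, `u ∈ A`. On `A` the three identities
for `*` read
* `(α²x · αs) · (α²x · q) = (αs · x) · (αs · q)`,
* `(αq · αx) · (αq · s) = (α³x · αq) · (αx · s)`,
* `(α²q · αs) · (q · x) = (α³s · α²q) · (αs · x)`.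

Comparing the last two (in the second, with `q` replaced by `αq`
and `x`, `s` interchanged) and cancelling gives
`α²q · x = q · x` on `A`, which is the second condition of the theorem (`shift_iff`). Under this
identity the first equation becomes the cycle identity on `A`, and conversely the cycle identity
yields all three.
-/

open Function

variable {X : Type*}

/-- The left component map `λ_x` of `r`, i.e. `λ_x (y) = (r (x,y)).1`. -/
def lam (r : X × X → X × X) (x y : X) : X := (r (x, y)).1

/-- The right component map `ρ_y` of `r`, i.e. `ρ_y (x) = (r (x,y)).2`. -/
def rho (r : X × X → X × X) (y x : X) : X := (r (x, y)).2

/-- The map `α × r : (x,y,z) ↦ (α x, r (y,z))` on `X × X × X`. -/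
def amr (α : X → X) (r : X × X → X × X) : X × X × X → X × X × X :=
  fun p => (α p.1, r p.2)

/-- The map `r × α : (x,y,z) ↦ (r (x,y), α z)` on `X × X × X`. -/
def rma (r : X × X → X × X) (α : X → X) : X × X × X → X × X × X :=
  fun p => ((r (p.1, p.2.1)).1, (r (p.1, p.2.1)).2, α p.2.2)

/-- `(X, r, α)` is a set-theoretic solution to the Hom-Yang-Baxter equation:
`r ∘ (α × α) = (α × α) ∘ r` and `(α × r)(r × α)(α × r) = (r × α)(α × r)(r × α)`. -/
def IsHYBESol (r : X × X → X × X) (α : X → X) : Prop :=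
  (∀ p : X × X, r (α p.1, α p.2) = (α (r p).1, α (r p).2)) ∧
  amr α r ∘ rma r α ∘ amr α r = rma r α ∘ amr α r ∘ rma r α

/-- The map `r × id : (x,y,z) ↦ (r (x,y), z)` on `X × X × X`. -/
def rid (r : X × X → X × X) : X × X × X → X × X × X :=
  fun p => ((r (p.1, p.2.1)).1, (r (p.1, p.2.1)).2, p.2.2)

/-- The map `id × r : (x,y,z) ↦ (x, r (y,z))` on `X × X × X`. -/
def idr (r : X × X → X × X) : X × X × X → X × X × X :=
  fun p => (p.1, r p.2)

/-- The cycle-set operation `x · y = λ_x⁻¹(y)`; `Function.invFun` is a genuine inverse when `λ_x` is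
bijective. -/
noncomputable def dot [Nonempty X] (r : X × X → X × X) (x y : X) : X :=
  Function.invFun (lam r x) y

/-- If `R (x, x * u) = (u, u * x)`, the Hom-braid relation at the triple
`(x, x * s, (x * s) * (β x * q))` amounts to one identity per coordinate. The case `β = id` is the
usual braid relation. -/
lemma braid_iff (R : X × X → X × X) (st : X → X → X) (β : X → X)
    (hR : ∀ x u, R (x, st x u) = (u, st u x)) (hb : ∀ x, Bijective (st x)) (x s q : X) :
    amr β R (rma R β (amr β R (x, st x s, st (st x s) (st (β x) q)))) =
      rma R β (amr β R (rma R β (x, st x s, st (st x s) (st (β x) q)))) ↔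
    β (st (st x s) (st (β x) q)) = st (st s x) (st (β s) (β q)) ∧
    β (st (st (β x) q) (st x s)) = st (st q (β x)) (st (β q) (β s)) ∧
    st (st (β q) (β s)) (st q (β x)) = β (st (st (β s) (β q)) (st s x)) := by
  obtain ⟨t, ht⟩ := (hb (st s x)).2 (β (st (st x s) (st (β x) q)))
  obtain ⟨w, rfl⟩ := (hb (β s)).2 t
  obtain ⟨e, he⟩ := (hb (st q (β x))).2 (β (st (st (β x) q) (st x s)))
  simp only [amr, rma, hR, ← ht, ← he, Prod.mk.injEq, (hb _).1.eq_iff]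
  constructor
  · rintro ⟨rfl, rfl, h⟩
    exact ⟨rfl, rfl, h⟩
  · rintro ⟨rfl, rfl, h⟩
    exact ⟨rfl, rfl, h⟩

lemma map_lam {r : X × X → X × X} {α : X → X}
    (hc : ∀ p : X × X, r (α p.1, α p.2) = (α (r p).1, α (r p).2)) (x y : X) :
    α (lam r x y) = lam r (α x) (α y) := by
  simp [lam, hc (x, y)]

section
variable [Nonempty X] {r : X × X → X × X} {α : X → X}

lemma lam_dot (hl : ∀ x, Bijective (lam r x)) (x y : X) : lam r x (dot r x y) = y :=
  Function.rightInverse_invFun (hl x).2 y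

lemma dot_lam (hl : ∀ x, Bijective (lam r x)) (x y : X) : dot r x (lam r x y) = y :=
  Function.leftInverse_invFun (hl x).1 y

lemma dot_bijective (hl : ∀ x, Bijective (lam r x)) (x : X) : Bijective (dot r x) :=
  ⟨(Function.LeftInverse.injective (lam_dot hl x)), fun y => ⟨_, dot_lam hl x y⟩⟩

lemma map_dot (hl : ∀ x, Bijective (lam r x))
    (hc : ∀ p : X × X, r (α p.1, α p.2) = (α (r p).1, α (r p).2)) (x y : X) :
    α (dot r x y) = dot r (α x) (α y) := by
  apply (hl (α x)).1
  rw [lam_dot hl, ← map_lam hc, lam_dot hl]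

/-- Involutivity determines the second component of `r` from the first. -/
lemma r_dot (hl : ∀ x, Bijective (lam r x)) (hi : r ∘ r = id) (x u : X) :
    r (x, dot r x u) = (u, dot r u x) := by
  have h1 : (r (x, dot r x u)).1 = u := lam_dot hl x u
  have h2 : r (r (x, dot r x u)) = (x, dot r x u) := congrFun hi _
  refine Prod.ext h1 ?_
  apply (hl u).1
  rw [lam_dot hl, lam]
  have h3 : (u, (r (x, dot r x u)).2) = r (x, dot r x u) := Prod.ext h1.symm rfl
  rw [h3, h2]

/-- On `α(X)`, the condition `r (α²u, v) = (id × α²) (r (u, v))` says that `α²u` and `u` act in the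
same way. -/
lemma shift_iff (hl : ∀ x, Bijective (lam r x)) (hi : r ∘ r = id)
    (hc : ∀ p : X × X, r (α p.1, α p.2) = (α (r p).1, α (r p).2)) :
    (∀ u ∈ Set.range α, ∀ v ∈ Set.range α,
      r (α (α u), v) = ((r (u, v)).1, α (α (r (u, v)).2))) ↔
    ∀ a b, dot r (α (α (α a))) (α b) = dot r (α a) (α b) := by
  constructor
  · intro h a b
    have := h (α a) ⟨a, rfl⟩ (dot r (α a) (α b)) ⟨dot r a b, map_dot hl hc a b⟩
    rw [r_dot hl hi] at this
    have h1 : lam r (α (α (α a))) (dot r (α a) (α b)) = α b := congrArg Prod.fst this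
    rw [← h1, dot_lam hl, h1]
  · rintro h _ ⟨a, rfl⟩ _ ⟨b, rfl⟩
    obtain ⟨c, rfl⟩ := (dot_bijective hl a).2 b
    rw [map_dot hl hc, r_dot hl hi, ← h, r_dot hl hi]
    simp only [map_dot hl hc]
    rw [h]

/-- The braid relation for `r` on `α(X)` is the cycle identity on `α(X)`. -/
lemma ybe_iff (hl : ∀ x, Bijective (lam r x)) (hi : r ∘ r = id)
    (hc : ∀ p : X × X, r (α p.1, α p.2) = (α (r p).1, α (r p).2)) :
    (∀ a b c : X, rid r (idr r (rid r (α a, α b, α c))) =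
      idr r (rid r (idr r (α a, α b, α c)))) ↔
    ∀ a b c, dot r (dot r (α a) (α b)) (dot r (α a) (α c)) =
      dot r (dot r (α b) (α a)) (dot r (α b) (α c)) := by
  have key := fun x s q => braid_iff r (dot r) id (r_dot hl hi) (dot_bijective hl) (α x) (α s) (α q)
  simp only [id] at key
  constructor
  · intro h a b c
    have := h a (dot r a b) (dot r (dot r a b) (dot r a c))
    simp only [map_dot hl hc] at this
    exact ((key a b c).1 this.symm).1
  · intro h a b c
    obtain ⟨s, rfl⟩ := (dot_bijective hl a).2 b
    obtain ⟨p, rfl⟩ := (dot_bijective hl (dot r a s)).2 c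
    obtain ⟨q, rfl⟩ := (dot_bijective hl a).2 p
    simp only [map_dot hl hc]
    exact ((key a s q).2 ⟨h a s q, h a q s, h q s a⟩).symm

end

theorem stmt19 [Nonempty X] (r : X × X → X × X) (α : X → X)
    (hl : ∀ x, Function.Bijective (lam r x)) (hi : r ∘ r = id)
    (hc : ∀ p : X × X, r (α p.1, α p.2) = (α (r p).1, α (r p).2)) :
    IsHYBESol (fun p : X × X =>
        (lam r (α p.1) p.2,
          Function.invFun (lam r (lam r (α (α p.1)) (α p.2))) p.1)) α ↔
      ((∀ a b c : X,
          rid r (idr r (rid r (α a, α b, α c))) =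
            idr r (rid r (idr r (α a, α b, α c)))) ∧
       (∀ u ∈ Set.range α, ∀ v ∈ Set.range α,
          r (α (α u), v) = ((r (u, v)).1, α (α (r (u, v)).2)))) := by
  set R : X × X → X × X := fun p : X × X =>
        (lam r (α p.1) p.2,
          Function.invFun (lam r (lam r (α (α p.1)) (α p.2))) p.1) with hRdef
  have hm := map_dot hl hc
  have hR : ∀ x u, R (x, dot r (α x) u) = (u, dot r (α u) x) := fun x u => by
    simp only [hRdef, hm, lam_dot hl]
    rfl
  have hb : ∀ x, Bijective (dot r (α x)) := fun x => dot_bijective hl _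
  have key := braid_iff R (fun x y => dot r (α x) y) α hR hb
  simp only [hm] at key
  rw [shift_iff hl hi hc, ybe_iff hl hi hc]
  constructor
  · rintro ⟨-, h⟩
    have E := fun x s q => (key x s q).1 (congrFun h _)
    have C : ∀ a b, dot r (α (α (α a))) (α b) = dot r (α a) (α b) := by
      intro q x
      -- the third coordinate at parameters `(x, q, q)` against the second at `(q, x, α q)`
      have h3 := (E x q q).2.2
      have h2 := (E q x (α q)).2.1
      exact (dot_bijective hl _).1 (h2.symm.trans h3.symm)
    refine ⟨fun a b c => ?_, C⟩
    -- the first coordinate with `s = α b` has `α³b` where `α b` is wanted; `C` removes the shift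
    have h1 := (E a (α b) c).1
    have e : dot r (dot r (α a) (α (α (α b)))) (dot r (α a) (α c)) =
        dot r (dot r (α a) (α b)) (dot r (α a) (α c)) := by
      have := C (dot r a b) (dot r a c)
      simpa only [hm, C] using this
    simp only [C] at h1
    exact e.symm.trans h1
  · rintro ⟨Y, C⟩
    refine ⟨fun p => ?_, ?_⟩
    · obtain ⟨x, y⟩ := p
      obtain ⟨u, rfl⟩ := (hb x).2 y
      simp only [hR, hm]
    · funext ⟨x, y, z⟩
      obtain ⟨s, rfl⟩ := (hb x).2 y
      obtain ⟨p, rfl⟩ := (hb (dot r (α x) s)).2 z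
      obtain ⟨q, rfl⟩ := (hb (α x)).2 p
      simp only [comp_apply, hm]
      refine (key x s q).2 ⟨?_, ?_, ?_⟩
      · simpa only [C] using Y x (α s) q
      · simpa only [C] using Y (α x) (α q) s
      · have e : dot r (dot r (α (α s)) (α (α (α q)))) (dot r (α (α s)) (α x)) =
            dot r (dot r (α (α s)) (α q)) (dot r (α (α s)) (α x)) := by
          have := C (dot r (α s) q) (dot r (α s) x)
          simpa only [hm, C] using this
        simp only [C]
        exact (Y q (α s) x).trans e.symm
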